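/- Let Ω := B(0,1) ∪ {X ∈ ℝ² : |X| > 2} ⊆ ℝ² (the interior of the complement of the closed annulus closure(B(0,2)) ∖ B(0,1)). Then: (i) ∂Ω is 1-Ahlfors–David regular; (ii) there exists D₀ ≥ 1 such that both Ω and int(ℝ² ∖ Ω) satisfy the local (D₀, 1/2)-John condition; but (iii) Ω does not satisfy the Harnack chain condition (Ω is not even connected), so Ω is not a chord-arc domain. -/

import Mathlib

open Set Metric MeasureTheory
open scoped ENNReal NNReal

noncomputable section

/-- Euclidean space `ℝ^m`. -/
abbrev Euc (m : ℕ) : Type := EuclideanSpace ℝ (Fin m)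

variable {m : ℕ}

/-- `E ⊆ ℝ^m` is `d`-Ahlfors–David regular: `E` is closed and there is `D ≥ 1` with
`D⁻¹ rᵈ ≤ ℋᵈ(B(x,r) ∩ E) ≤ D rᵈ` for all `x ∈ E` and `0 < r < diam E`. -/
def IsADR (d : ℝ) (E : Set (Euc m)) : Prop :=
  IsClosed E ∧ ∃ D : ℝ, 1 ≤ D ∧ ∀ x ∈ E, ∀ r : ℝ, 0 < r →
    ENNReal.ofReal r < EMetric.diam E →
      ENNReal.ofReal (r ^ d / D) ≤ μH[d] (ball x r ∩ E) ∧
        μH[d] (ball x r ∩ E) ≤ ENNReal.ofReal (D * r ^ d)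

/-- The corkscrew condition for `Ω` with constant `c ∈ (0,1)`: for every `x ∈ ∂Ω` and
`0 < r < diam ∂Ω` there is `X ∈ Ω` with `B(X, c·r) ⊆ B(x,r) ∩ Ω`. -/
def CorkscrewWith (Ω : Set (Euc m)) (c : ℝ) : Prop :=
  ∀ x ∈ frontier Ω, ∀ r : ℝ, 0 < r → ENNReal.ofReal r < EMetric.diam (frontier Ω) →
    ∃ X ∈ Ω, ball X (c * r) ⊆ ball x r ∩ Ω

/-- The corkscrew condition (for some constant `c ∈ (0,1)`). -/
def Corkscrew (Ω : Set (Euc m)) : Prop := ∃ c : ℝ, 0 < c ∧ c < 1 ∧ CorkscrewWith Ω c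

/-- The 2-sided corkscrew condition: both `Ω` and `int (Ωᶜ)` satisfy the corkscrew condition. -/
def TwoSidedCorkscrew (Ω : Set (Euc m)) : Prop :=
  Corkscrew Ω ∧ Corkscrew (interior Ωᶜ)

/-- The distance between two sets. -/
def distSet (s t : Set (Euc m)) : ℝ := sInf {d : ℝ | ∃ x ∈ s, ∃ y ∈ t, d = dist x y}

/-- A path in `Ω`: a continuous map `γ : [0,1] → closure Ω` with `γ(t) ∈ Ω` for `t ∈ (0,1]`. -/
def IsPathIn (Ω : Set (Euc m)) (γ : ℝ → Euc m) : Prop :=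
  ContinuousOn γ (Icc 0 1) ∧ (∀ t ∈ Icc (0:ℝ) 1, γ t ∈ closure Ω) ∧
    ∀ t ∈ Ioc (0:ℝ) 1, γ t ∈ Ω

/-- The length (total variation) of a path `γ : [0,1] → ℝ^m`. -/
def pathLen (γ : ℝ → Euc m) : ℝ≥0∞ := eVariationOn γ (Icc 0 1)

/-- A `D`-non-tangential path in `Ω`: a path in `Ω` such that for every `t ∈ [0,1]` the length of
`γ` restricted to `[0,t]` is at most `D · dist(γ t, ∂Ω)`. -/
def IsNTPath (Ω : Set (Euc m)) (D : ℝ) (γ : ℝ → Euc m) : Prop :=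
  IsPathIn Ω γ ∧ ∀ t ∈ Icc (0:ℝ) 1,
    eVariationOn γ (Icc 0 t) ≤ ENNReal.ofReal (D * infDist (γ t) (frontier Ω))

/-- The `D₀`-John condition: there is `X₀ ∈ Ω` such that every `Y ∈ Ω` can be joined to `X₀` by a
`D₀`-non-tangential path in `Ω` from `Y` to `X₀`. -/
def JohnWith (Ω : Set (Euc m)) (D₀ : ℝ) : Prop :=
  ∃ X₀ ∈ Ω, ∀ Y ∈ Ω, ∃ γ : ℝ → Euc m, IsNTPath Ω D₀ γ ∧ γ 0 = Y ∧ γ 1 = X₀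

/-- The local `(D₀, R₀)`-John condition: for every `x ∈ ∂Ω` and `0 < r < R₀` there is a local John
point `Y ∈ B(x,r) ∩ Ω` with `B(Y, r/D₀) ⊆ Ω` such that every `z ∈ B(x,r) ∩ ∂Ω` can be joined to
`Y` by a `D₀`-non-tangential path in `Ω` of length at most `D₀ r`. -/
def LocalJohnWithin (Ω : Set (Euc m)) (D₀ R₀ : ℝ) : Prop :=
  ∀ x ∈ frontier Ω, ∀ r : ℝ, 0 < r → r < R₀ →
    ∃ Y ∈ ball x r ∩ Ω, ball Y (r / D₀) ⊆ Ω ∧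
      ∀ z ∈ ball x r ∩ frontier Ω, ∃ γ : ℝ → Euc m,
        IsNTPath Ω D₀ γ ∧ γ 0 = z ∧ γ 1 = Y ∧ pathLen γ ≤ ENNReal.ofReal (D₀ * r)

/-- The local `D₀`-John condition (i.e. the local `(D₀, diam ∂Ω)`-John condition). -/
def LocalJohnWith (Ω : Set (Euc m)) (D₀ : ℝ) : Prop :=
  ∀ x ∈ frontier Ω, ∀ r : ℝ, 0 < r → ENNReal.ofReal r < EMetric.diam (frontier Ω) →
    ∃ Y ∈ ball x r ∩ Ω, ball Y (r / D₀) ⊆ Ω ∧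
      ∀ z ∈ ball x r ∩ frontier Ω, ∃ γ : ℝ → Euc m,
        IsNTPath Ω D₀ γ ∧ γ 0 = z ∧ γ 1 = Y ∧ pathLen γ ≤ ENNReal.ofReal (D₀ * r)

/-- The weak local `D₀`-John condition, with surface measure `ℋᵈ` on `∂Ω`. -/
def WeakLocalJohnWith (d : ℝ) (Ω : Set (Euc m)) (D₀ : ℝ) : Prop :=
  ∃ θ : ℝ, 0 < θ ∧ θ ≤ 1 ∧ ∃ R : ℝ, 2 ≤ R ∧ ∀ X ∈ Ω,
    ∃ F : Set (Euc m), MeasurableSet F ∧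
      F ⊆ ball X (R * infDist X (frontier Ω)) ∩ frontier Ω ∧
      ENNReal.ofReal θ * μH[d] (ball X (R * infDist X (frontier Ω)) ∩ frontier Ω) ≤ μH[d] F ∧
      ∀ z ∈ F, ∃ γ : ℝ → Euc m, IsNTPath Ω D₀ γ ∧ γ 0 = z ∧ γ 1 = X ∧
        pathLen γ ≤ ENNReal.ofReal (D₀ * (R * infDist X (frontier Ω)))

/-- The Harnack chain condition: there are `C ≥ 1` and `M : ℝ → ℕ` such that any `X, X' ∈ Ω` with
`δ(X), δ(X') ≥ ρ` and `|X - X'| < Λ ρ` can be joined by a chain of at most `M Λ` open balls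
contained in `Ω`, consecutive balls intersecting, with `C⁻¹ diam Bₖ ≤ dist(Bₖ, ∂Ω) ≤ C diam Bₖ`. -/
def HarnackChain (Ω : Set (Euc m)) : Prop :=
  ∃ C : ℝ, 1 ≤ C ∧ ∃ M : ℝ → ℕ,
    ∀ ρ : ℝ, 0 < ρ → ∀ Λ : ℝ, 1 ≤ Λ → ∀ X ∈ Ω, ∀ X' ∈ Ω,
      ρ ≤ infDist X (frontier Ω) → ρ ≤ infDist X' (frontier Ω) → dist X X' < Λ * ρ →
      ∃ N : ℕ, 1 ≤ N ∧ N ≤ M Λ ∧ ∃ ctr : ℕ → Euc m, ∃ rad : ℕ → ℝ,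
        X ∈ ball (ctr 0) (rad 0) ∧ X' ∈ ball (ctr (N - 1)) (rad (N - 1)) ∧
        (∀ k < N, ball (ctr k) (rad k) ⊆ Ω) ∧
        (∀ k, k + 1 < N → (ball (ctr k) (rad k) ∩ ball (ctr (k + 1)) (rad (k + 1))).Nonempty) ∧
        (∀ k < N,
          C⁻¹ * Metric.diam (ball (ctr k) (rad k))
              ≤ distSet (ball (ctr k) (rad k)) (frontier Ω) ∧
            distSet (ball (ctr k) (rad k)) (frontier Ω)
              ≤ C * Metric.diam (ball (ctr k) (rad k)))

/-- A domain (connected open set) is NTA if it satisfies the Harnack chain condition and the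
2-sided corkscrew condition. -/
def IsNTA (Θ : Set (Euc m)) : Prop :=
  IsOpen Θ ∧ IsConnected Θ ∧ HarnackChain Θ ∧ TwoSidedCorkscrew Θ

/-- `Ω` is a chord-arc domain: NTA with `d`-ADR boundary. -/
def IsCAD (d : ℝ) (Ω : Set (Euc m)) : Prop := IsNTA Ω ∧ IsADR d (frontier Ω)

/-- `Ω` is a 2-sided chord-arc domain: a chord-arc domain such that `int (Ωᶜ)` is NTA. -/
def IsTwoSidedCAD (d : ℝ) (Ω : Set (Euc m)) : Prop := IsCAD d Ω ∧ IsNTA (interior Ωᶜ)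

/-- `E`, with the Euclidean metric, is quasiconvex: any two points of `E` can be joined by a path
in `E` of length at most `C` times their distance. -/
def QuasiconvexSet (E : Set (Euc m)) : Prop :=
  ∃ C : ℝ, 1 ≤ C ∧ ∀ x ∈ E, ∀ y ∈ E, ∃ γ : ℝ → Euc m,
    ContinuousOn γ (Icc 0 1) ∧ (∀ t ∈ Icc (0:ℝ) 1, γ t ∈ E) ∧ γ 0 = x ∧ γ 1 = y ∧
      eVariationOn γ (Icc 0 1) ≤ ENNReal.ofReal (C * dist x y)

/-- `E`, with the Euclidean metric, is annularly quasiconvex. -/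
def AnnularlyQuasiconvexSet (E : Set (Euc m)) : Prop :=
  ∃ C : ℝ, 1 ≤ C ∧ ∀ z ∈ E, ∀ r : ℝ, 0 < r →
    ENNReal.ofReal (C * r) < EMetric.diam E →
    ∀ x ∈ E ∩ (ball z (2 * r) \ ball z r), ∀ y ∈ E ∩ (ball z (2 * r) \ ball z r),
      ∃ γ : ℝ → Euc m, ContinuousOn γ (Icc 0 1) ∧
        (∀ t ∈ Icc (0:ℝ) 1, γ t ∈ E ∩ (ball z (C * r) \ ball z (r / C))) ∧
        γ 0 = x ∧ γ 1 = y ∧ eVariationOn γ (Icc 0 1) ≤ ENNReal.ofReal (C * dist x y)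

/-- `ρ` is an upper gradient of `f` on `E`: for every `1`-Lipschitz curve `γ : [0,L] → E` we have
`|f(γ 0) - f(γ L)| ≤ ∫₀ᴸ ρ(γ t) dt`. -/
def IsUpperGradientOn (f : Euc m → ℝ) (ρ : Euc m → ℝ≥0∞) (E : Set (Euc m)) : Prop :=
  ∀ L : ℝ, 0 ≤ L → ∀ γ : ℝ → Euc m, LipschitzOnWith 1 γ (Icc 0 L) →
    (∀ t ∈ Icc (0:ℝ) L, γ t ∈ E) →
    ENNReal.ofReal |f (γ 0) - f (γ L)| ≤ ∫⁻ t in Icc (0:ℝ) L, ρ (γ t)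

/-- `ϱ` is admissible for the pair `(E,F)` in `S`: `∫_γ ϱ ds ≥ 1` for every rectifiable
(`1`-Lipschitz parametrized) path in `S` connecting `E` and `F`. -/
def AdmissibleFor (S E F : Set (Euc m)) (ϱ : Euc m → ℝ≥0∞) : Prop :=
  ∀ L : ℝ, 0 < L → ∀ γ : ℝ → Euc m, LipschitzOnWith 1 γ (Icc 0 L) →
    (∀ t ∈ Icc (0:ℝ) L, γ t ∈ S) → γ 0 ∈ E → γ L ∈ F →
    1 ≤ ∫⁻ t in Icc (0:ℝ) L, ϱ (γ t)

/-- The `d`-modulus of the family of paths in `S` connecting `E` and `F`, w.r.t. measure `σ`. -/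
def modOn (σ : Measure (Euc m)) (S E F : Set (Euc m)) (d : ℝ) : ℝ≥0∞ :=
  sInf {v : ℝ≥0∞ | ∃ ϱ : Euc m → ℝ≥0∞, Measurable ϱ ∧ AdmissibleFor S E F ϱ ∧
    v = ∫⁻ x, ϱ x ^ d ∂σ}

/-- `L` is an affine hyperplane (affine subspace of codimension 1) of `ℝ^m`. -/
def IsAffineHyperplane (L : Set (Euc m)) : Prop :=
  ∃ A : AffineSubspace ℝ (Euc m), (A : Set (Euc m)) = L ∧
    Module.finrank ℝ A.direction + 1 = m

/-- The bilateral β-number `bβ_{∂Ω}(B(x,r), L)`. -/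
def bBeta (Ω : Set (Euc m)) (x : Euc m) (r : ℝ) (L : Set (Euc m)) : ℝ :=
  sSup ((fun y => infDist y L / r) '' (ball x r ∩ frontier Ω)) +
    sSup ((fun Y => infDist Y (frontier Ω) / r) '' (L ∩ ball x r))

/-- The open `c`-neighborhood `U_c(L)` of `L`. -/
def tubeNbhd (L : Set (Euc m)) (c : ℝ) : Set (Euc m) := {Y | infDist Y L < c}

/-- The interior of the complement of the closed annulus `closure B(0,2) ∖ B(0,1)` in `ℝ²`. -/
def pinched : Set (Euc 2) := ball (0 : Euc 2) 1 ∪ {X : Euc 2 | 2 < ‖X‖}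

/-! ### Topology of the example -/

lemma outer_eq : {X : Euc 2 | 2 < ‖X‖} = (closedBall (0 : Euc 2) 2)ᶜ := by
  ext X; simp

lemma closure_pinched :
    closure pinched = closedBall (0 : Euc 2) 1 ∪ (ball (0 : Euc 2) 2)ᶜ := by
  rw [pinched, closure_union, closure_ball _ one_ne_zero, outer_eq, closure_compl,
    interior_closedBall _ two_ne_zero]

lemma isOpen_pinched : IsOpen pinched := by
  rw [pinched, outer_eq]
  exact isOpen_ball.union isClosed_closedBall.isOpen_compl

lemma frontier_pinched :
    frontier pinched = {X : Euc 2 | ‖X‖ = 1 ∨ ‖X‖ = 2} := by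
  rw [frontier, isOpen_pinched.interior_eq, closure_pinched]
  ext X
  simp only [pinched, mem_diff, mem_union, mem_closedBall, dist_zero_right, mem_compl_iff,
    mem_ball, mem_setOf_eq]
  constructor
  · rintro ⟨h1 | h1, h2⟩
    · left; by_contra h; exact h2 (Or.inl (lt_of_le_of_ne h1 h))
    · right; by_contra h; exact h2 (Or.inr (lt_of_le_of_ne (not_lt.1 h1) (Ne.symm h)))
  · rintro (h | h) <;> rw [h] <;> norm_num

lemma annulus_eq : interior pinchedᶜ = {X : Euc 2 | 1 < ‖X‖ ∧ ‖X‖ < 2} := by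
  rw [interior_compl, closure_pinched]
  ext X
  simp

lemma frontier_annulus :
    frontier (interior pinchedᶜ) = {X : Euc 2 | ‖X‖ = 1 ∨ ‖X‖ = 2} := by
  have hd : Disjoint (closure (closedBall (0 : Euc 2) 1)) (closure (ball (0 : Euc 2) 2)ᶜ) := by
    rw [isClosed_closedBall.closure_eq, isOpen_ball.isClosed_compl.closure_eq,
      Set.disjoint_left]
    intro X hX hX'
    simp only [mem_closedBall, dist_zero_right, mem_compl_iff, mem_ball, not_lt] at hX hX'
    linarith
  have : interior (closure pinched) = pinched := by
    rw [closure_pinched, interior_union_of_disjoint_closure hd,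
      interior_closedBall _ one_ne_zero, interior_compl, closure_ball _ two_ne_zero,
      pinched, outer_eq]
  rw [interior_compl, frontier_compl, ← frontier_pinched, frontier, this, closure_closure,
    frontier, isOpen_pinched.interior_eq]

/-! ### Connectivity -/

lemma subset_ball_of_preconnected {s : Set (Euc 2)} (hs : IsPreconnected s) (h : s ⊆ pinched)
    (hn : (s ∩ ball (0 : Euc 2) 1).Nonempty) : s ⊆ ball (0 : Euc 2) 1 := by
  refine IsPreconnected.subset_left_of_subset_union (v := {X : Euc 2 | 2 < ‖X‖}) isOpen_ball
    ?_ ?_ h hn hs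
  · rw [outer_eq]; exact isClosed_closedBall.isOpen_compl
  · rw [Set.disjoint_left]
    intro X h1 h2
    simp only [mem_ball, dist_zero_right, mem_setOf_eq] at h1 h2
    linarith

lemma le_infDist_circles {p : Euc 2} {a : ℝ} (h1 : a ≤ |‖p‖ - 1|) (h2 : a ≤ |‖p‖ - 2|) :
    a ≤ infDist p {X : Euc 2 | ‖X‖ = 1 ∨ ‖X‖ = 2} := by
  have hne : {X : Euc 2 | ‖X‖ = 1 ∨ ‖X‖ = 2}.Nonempty :=
    ⟨EuclideanSpace.single 0 1, by simp⟩
  rw [le_infDist hne]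
  rintro y hy
  have := abs_norm_sub_norm_le p y
  rw [dist_eq_norm]
  rcases hy with hy | hy <;> rw [hy] at this <;> linarith

lemma far_norm : ‖(EuclideanSpace.single 0 4 : Euc 2)‖ = 4 := by simp

lemma far_mem : (EuclideanSpace.single 0 4 : Euc 2) ∈ pinched := by
  right
  rw [mem_setOf_eq, far_norm]; norm_num

lemma zero_mem_pinched : (0 : Euc 2) ∈ pinched := by
  left; simp

lemma not_connected_pinched : ¬ IsConnected pinched := by
  intro h
  have := subset_ball_of_preconnected h.isPreconnected subset_rfl
    ⟨0, zero_mem_pinched, by simp⟩ far_mem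
  rw [mem_ball, dist_zero_right, far_norm] at this
  norm_num at this

lemma not_harnack_pinched : ¬ HarnackChain pinched := by
  rintro ⟨C, -, M, h⟩
  obtain ⟨N, hN, -, ctr, rad, h0, h1, hsub, hint, -⟩ := h 1 one_pos 5 (by norm_num) 0
    zero_mem_pinched _ far_mem
    (by rw [frontier_pinched]; apply le_infDist_circles <;> norm_num)
    (by rw [frontier_pinched]; apply le_infDist_circles <;> rw [far_norm] <;> norm_num)
    (by rw [dist_zero_left, far_norm]; norm_num)
  have key : ∀ k < N, ball (ctr k) (rad k) ⊆ ball (0 : Euc 2) 1 := by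
    intro k
    induction k with
    | zero =>
      intro hk
      exact subset_ball_of_preconnected (convex_ball _ _).isPreconnected (hsub 0 hk)
        ⟨0, h0, by simp⟩
    | succ k ih =>
      intro hk
      obtain ⟨y, hy1, hy2⟩ := hint k hk
      exact subset_ball_of_preconnected (convex_ball _ _).isPreconnected (hsub _ hk)
        ⟨y, hy2, ih (by omega) hy1⟩
  have := key (N - 1) (by omega) h1
  rw [mem_ball, dist_zero_right, far_norm] at this
  norm_num at this

/-! ### The local John condition: straight segments -/

lemma segment_len (z Y : Euc 2) {t : ℝ} (ht : 0 ≤ t) :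
    eVariationOn (fun s : ℝ => z + s • (Y - z)) (Icc 0 t) ≤ ENNReal.ofReal (t * dist z Y) := by
  have hL : LipschitzOnWith (nndist z Y) (fun s : ℝ => z + s • (Y - z)) univ := by
    refine LipschitzOnWith.of_dist_le_mul fun a _ b _ => le_of_eq ?_
    rw [dist_add_left, dist_eq_norm, ← sub_smul, norm_smul, coe_nndist, dist_eq_norm,
      dist_eq_norm, norm_sub_rev z Y, mul_comm]
  have h1 := hL.comp_eVariationOn_le (g := (id : ℝ → ℝ)) (s := Icc 0 t) (mapsTo_univ _ _)
  have h2 : eVariationOn (id : ℝ → ℝ) (Icc 0 t) ≤ ENNReal.ofReal t := by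
    have := (monotone_id.monotoneOn (Icc (0:ℝ) t)).eVariationOn_le
      (left_mem_Icc.2 ht) (right_mem_Icc.2 ht)
    simpa using this
  refine (h1.trans (mul_le_mul_right h2 _)).trans (le_of_eq ?_)
  rw [mul_comm t, ENNReal.ofReal_mul dist_nonneg, ← coe_nndist, ENNReal.ofReal_coe_nnreal]

lemma john_segment {Ω : Set (Euc 2)} {z Y : Euc 2} {r : ℝ} (hr : 0 < r)
    (hz : z ∈ frontier Ω)
    (hΩ : ∀ t ∈ Ioc (0:ℝ) 1, z + t • (Y - z) ∈ Ω)
    (hδ : ∀ t ∈ Icc (0:ℝ) 1, t * r / 16 ≤ infDist (z + t • (Y - z)) (frontier Ω))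
    (hd : dist z Y ≤ 3 / 2 * r) :
    ∃ γ : ℝ → Euc 2, IsNTPath Ω 100 γ ∧ γ 0 = z ∧ γ 1 = Y ∧
      pathLen γ ≤ ENNReal.ofReal (100 * r) := by
  refine ⟨fun t => z + t • (Y - z), ⟨⟨by fun_prop, ?_, hΩ⟩, ?_⟩, by simp, by simp, ?_⟩
  · intro t ht
    rcases eq_or_lt_of_le ht.1 with h | h
    · subst h; simpa using frontier_subset_closure hz
    · exact subset_closure (hΩ t ⟨h, ht.2⟩)
  · intro t ht
    refine (segment_len z Y ht.1).trans (ENNReal.ofReal_le_ofReal ?_)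
    have := hδ t ht
    have := mul_le_mul_of_nonneg_left hd ht.1
    have := mul_nonneg ht.1 hr.le
    simp only
    linarith
  · refine (segment_len z Y zero_le_one).trans (ENNReal.ofReal_le_ofReal ?_)
    linarith

lemma norm_sq_segment {x z : Euc 2} {ρ : ℝ} (hx : ‖x‖ = ρ) (hz : ‖z‖ = ρ) (s t : ℝ) :
    ‖z + t • (s • x - z)‖ ^ 2 = (ρ * ((1 - t) + t * s)) ^ 2 - t * (1 - t) * s * dist z x ^ 2 := by
  have h1 : z + t • (s • x - z) = (1 - t) • z + (t * s) • x := by module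
  rw [h1, dist_eq_norm, norm_add_sq_real, norm_sub_sq_real, norm_smul, norm_smul, hx, hz,
    real_inner_smul_left, real_inner_smul_right, mul_pow, mul_pow, Real.norm_eq_abs,
    Real.norm_eq_abs, sq_abs, sq_abs]
  ring

lemma segment_out {x z : Euc 2} {ρ r t : ℝ} (hρ : 1 ≤ ρ) (hρ2 : ρ ≤ 2)
    (hx : ‖x‖ = ρ) (hz : ‖z‖ = ρ) (hr : 0 < r) (hr2 : r < 1 / 2) (hd : dist z x < r)
    (ht : 0 ≤ t) (ht1 : t ≤ 1) :
    ρ + t * r / 16 ≤ ‖z + t • ((1 + r / (2 * ρ)) • x - z)‖ ∧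
      ‖z + t • ((1 + r / (2 * ρ)) • x - z)‖ ≤ ρ + t * r / 2 := by
  have hsq := norm_sq_segment hx hz (1 + r / (2 * ρ)) t
  have e : ρ * ((1 - t) + t * (1 + r / (2 * ρ))) = ρ + t * r / 2 := by field_simp; ring
  rw [e] at hsq
  have hq : 0 ≤ r / (2 * ρ) := by positivity
  have hq1 : r / (2 * ρ) ≤ 1 / 4 := by
    rw [div_le_iff₀ (by linarith)]; linarith
  generalize r / (2 * ρ) = q at *
  have hd0 : (0:ℝ) ≤ dist z x := dist_nonneg
  have hd2 : dist z x ^ 2 ≤ r / 2 := by nlinarith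
  have htt : 0 ≤ t * (1 - t) := mul_nonneg ht (by linarith)
  have hc0 : 0 ≤ t * (1 - t) * (1 + q) * dist z x ^ 2 := by positivity
  have hc1 : t * (1 - t) * (1 + q) * dist z x ^ 2 ≤ t * (5 / 4) * (r / 2) := by
    have : t * (1 - t) * (1 + q) ≤ t * (5 / 4) := by
      rw [mul_assoc]
      apply mul_le_mul_of_nonneg_left _ ht
      nlinarith
    exact mul_le_mul this hd2 (by positivity) (by positivity)
  have htr : 0 ≤ t * r := mul_nonneg ht hr.le
  have htr1 : t * r ≤ 1 / 2 := by nlinarith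
  constructor
  · apply le_of_sq_le_sq _ (norm_nonneg _)
    rw [hsq]
    nlinarith
  · apply le_of_sq_le_sq _ (by positivity)
    rw [hsq]
    linarith

lemma segment_in {x z : Euc 2} {ρ r t : ℝ} (hρ : 1 ≤ ρ)
    (hx : ‖x‖ = ρ) (hz : ‖z‖ = ρ) (hr : 0 < r) (hr2 : r < 1 / 2)
    (ht : 0 ≤ t) (ht1 : t ≤ 1) :
    ‖z + t • ((1 - r / (2 * ρ)) • x - z)‖ ≤ ρ - t * r / 2 := by
  have h1 : z + t • ((1 - r / (2 * ρ)) • x - z) = (1 - t) • z + (t * (1 - r / (2 * ρ))) • x := by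
    module
  have hq1 : r / (2 * ρ) ≤ 1 / 4 := by
    rw [div_le_iff₀ (by linarith)]; linarith
  rw [h1]
  refine (norm_add_le _ _).trans (le_of_eq ?_)
  rw [norm_smul, norm_smul, hx, hz, Real.norm_of_nonneg (by linarith),
    Real.norm_of_nonneg (mul_nonneg ht (by linarith))]
  field_simp
  ring

/-- distance from the base point to the John point -/
lemma dist_john {x : Euc 2} {ρ r a : ℝ} (hρ : 1 ≤ ρ) (hx : ‖x‖ = ρ) (hr : 0 < r)
    (ha : |a - 1| = r / (2 * ρ)) : dist x (a • x) = r / 2 := by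
  have : x - a • x = (1 - a) • x := by module
  rw [dist_eq_norm, this, norm_smul, hx, Real.norm_eq_abs, abs_sub_comm, ha]
  field_simp

lemma norm_eq_of_near {x z : Euc 2} {r : ℝ} (hx : ‖x‖ = 1 ∨ ‖x‖ = 2) (hz : ‖z‖ = 1 ∨ ‖z‖ = 2)
    (hr2 : r < 1 / 2) (hd : dist z x < r) : ‖z‖ = ‖x‖ := by
  have := abs_le.1 (abs_norm_sub_norm_le z x)
  rw [dist_eq_norm] at hd
  rcases hx with hx | hx <;> rcases hz with hz | hz <;> rw [hx, hz] at this ⊢ <;>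
    linarith [this.1, this.2]

lemma john_step {Ω : Set (Euc 2)} (hfr : frontier Ω = {X : Euc 2 | ‖X‖ = 1 ∨ ‖X‖ = 2})
    {x : Euc 2} {ρ r a : ℝ} (hρ : 1 ≤ ρ) (hxf : ‖x‖ = 1 ∨ ‖x‖ = 2) (hx : ‖x‖ = ρ) (hr : 0 < r)
    (hr2 : r < 1 / 2) (ha : |a - 1| = r / (2 * ρ))
    (hball : ball (a • x) (r / 100) ⊆ Ω)
    (hseg : ∀ z : Euc 2, ‖z‖ = ρ → dist z x < r → ∀ t : ℝ, 0 ≤ t → t ≤ 1 →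
      (0 < t → z + t • (a • x - z) ∈ Ω) ∧ t * r / 16 ≤ |‖z + t • (a • x - z)‖ - 1| ∧
        t * r / 16 ≤ |‖z + t • (a • x - z)‖ - 2|) :
    ∃ Y ∈ ball x r ∩ Ω, ball Y (r / 100) ⊆ Ω ∧
      ∀ z ∈ ball x r ∩ frontier Ω, ∃ γ : ℝ → Euc 2,
        IsNTPath Ω 100 γ ∧ γ 0 = z ∧ γ 1 = Y ∧ pathLen γ ≤ ENNReal.ofReal (100 * r) := by
  have hdY := dist_john hρ hx hr ha
  refine ⟨a • x, ⟨?_, hball (mem_ball_self (by positivity))⟩, hball, ?_⟩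
  · rw [mem_ball', hdY]; linarith
  · rintro z ⟨hz, hzf⟩
    rw [mem_ball] at hz
    have hzn : ‖z‖ = ρ := by
      rw [← hx]
      rw [hfr] at hzf
      exact norm_eq_of_near hxf hzf hr2 hz
    refine john_segment hr hzf (fun t ht => (hseg z hzn hz t ht.1.le ht.2).1 ht.1) ?_ ?_
    · intro t ht
      rw [hfr]
      have := hseg z hzn hz t ht.1 ht.2
      exact le_infDist_circles this.2.1 this.2.2
    · have := dist_triangle z x (a • x)
      linarith

lemma norm_john_bound {x y : Euc 2} {ρ r : ℝ} {a : ℝ} (hx : ‖x‖ = ρ) (ha : 0 ≤ a)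
    (hy : y ∈ ball (a • x) (r / 100)) :
    a * ρ - r / 100 < ‖y‖ ∧ ‖y‖ < a * ρ + r / 100 := by
  have h := abs_le.1 (abs_norm_sub_norm_le y (a • x))
  rw [mem_ball, dist_eq_norm] at hy
  rw [norm_smul, hx, Real.norm_of_nonneg ha] at h
  constructor <;> linarith [h.1, h.2]

lemma john_pinched : LocalJohnWithin pinched 100 (1 / 2) := by
  intro x hx r hr hr2
  rw [frontier_pinched] at hx
  rcases hx with hx1 | hx2
  · have hq : (1 - r / (2 * 1)) * 1 = 1 - r / 2 := by ring
    refine john_step frontier_pinched (a := 1 - r / (2 * 1)) le_rfl (Or.inl hx1) hx1 hr hr2 ?_ ?_ ?_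
    · rw [sub_sub_cancel_left, abs_neg, abs_of_nonneg (by positivity)]
    · intro y hy
      have := norm_john_bound hx1 (by linarith) hy
      left
      rw [mem_ball, dist_zero_right]
      linarith [this.2]
    · intro z hz hd t ht ht1
      have h := segment_in le_rfl hx1 hz hr hr2 ht ht1
      have htr : 0 ≤ t * r := mul_nonneg ht hr.le
      refine ⟨fun h0 => ?_, ?_, ?_⟩
      · left
        have := mul_pos h0 hr
        rw [mem_ball, dist_zero_right]
        linarith
      · rw [abs_of_nonpos] <;> linarith
      · rw [abs_of_nonpos] <;> linarith
  · have hq : (1 + r / (2 * 2)) * 2 = 2 + r / 2 := by ring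
    refine john_step frontier_pinched (a := 1 + r / (2 * 2)) one_le_two (Or.inr hx2) hx2 hr hr2
      ?_ ?_ ?_
    · rw [add_sub_cancel_left, abs_of_nonneg (by positivity)]
    · intro y hy
      have := norm_john_bound hx2 (by positivity) hy
      right
      rw [mem_setOf_eq]
      linarith [this.1]
    · intro z hz hd t ht ht1
      have h := (segment_out one_le_two le_rfl hx2 hz hr hr2 hd ht ht1).1
      have htr : 0 ≤ t * r := mul_nonneg ht hr.le
      refine ⟨fun h0 => ?_, ?_, ?_⟩
      · right
        have := mul_pos h0 hr
        rw [mem_setOf_eq]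
        linarith
      · rw [abs_of_nonneg] <;> linarith
      · rw [abs_of_nonneg] <;> linarith

lemma john_annulus : LocalJohnWithin (interior pinchedᶜ) 100 (1 / 2) := by
  intro x hx r hr hr2
  rw [frontier_annulus] at hx
  rcases hx with hx1 | hx2
  · have hq : (1 + r / (2 * 1)) * 1 = 1 + r / 2 := by ring
    refine john_step frontier_annulus (a := 1 + r / (2 * 1)) le_rfl (Or.inl hx1) hx1 hr hr2 ?_ ?_ ?_
    · rw [add_sub_cancel_left, abs_of_nonneg (by positivity)]
    · intro y hy
      have := norm_john_bound hx1 (by positivity) hy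
      rw [annulus_eq, mem_setOf_eq]
      constructor <;> linarith [this.1, this.2]
    · intro z hz hd t ht ht1
      have h := segment_out le_rfl one_le_two hx1 hz hr hr2 hd ht ht1
      have htr : 0 ≤ t * r := mul_nonneg ht hr.le
      have htr1 : t * r ≤ 1 / 2 := by nlinarith
      refine ⟨fun h0 => ?_, ?_, ?_⟩
      · have := mul_pos h0 hr
        rw [annulus_eq, mem_setOf_eq]
        constructor <;> linarith [h.1, h.2]
      · rw [abs_of_nonneg] <;> linarith [h.1, h.2]
      · rw [abs_of_nonpos] <;> linarith [h.1, h.2]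
  · have hq : (1 - r / (2 * 2)) * 2 = 2 - r / 2 := by ring
    have ha : |1 - r / (2 * 2) - 1| = r / (2 * 2) := by
      rw [sub_sub_cancel_left, abs_neg, abs_of_nonneg (by positivity)]
    refine john_step frontier_annulus (a := 1 - r / (2 * 2)) one_le_two (Or.inr hx2) hx2 hr hr2
      ha ?_ ?_
    · intro y hy
      have := norm_john_bound hx2 (by linarith) hy
      rw [annulus_eq, mem_setOf_eq]
      constructor <;> linarith [this.1, this.2]
    · intro z hz hd t ht ht1
      have h := segment_in one_le_two hx2 hz hr hr2 ht ht1
      have htr : 0 ≤ t * r := mul_nonneg ht hr.le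
      have htr1 : t * r ≤ 1 / 2 := by nlinarith
      have hlow : 5 / 4 ≤ ‖z + t • ((1 - r / (2 * 2)) • x - z)‖ := by
        have h1 := norm_sub_norm_le z (-(t • ((1 - r / (2 * 2)) • x - z)))
        rw [sub_neg_eq_add, norm_neg, norm_smul, Real.norm_of_nonneg ht, hz, ← dist_eq_norm,
          dist_comm] at h1
        have h2 := dist_triangle z x ((1 - r / (2 * 2)) • x)
        rw [dist_john one_le_two hx2 hr ha] at h2
        have h3 : (0:ℝ) ≤ dist z ((1 - r / (2 * 2)) • x) := dist_nonneg
        nlinarith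
      refine ⟨fun h0 => ?_, ?_, ?_⟩
      · have := mul_pos h0 hr
        rw [annulus_eq, mem_setOf_eq]
        constructor <;> linarith
      · rw [abs_of_nonneg] <;> linarith
      · rw [abs_of_nonpos] <;> linarith

/-! ### Ahlfors regularity of the two circles -/

lemma lipschitz_circle {y : ℂ} (hy : ‖y‖ ≤ 2) :
    LipschitzWith 2 (fun θ : ℝ => y * Complex.exp (θ * Complex.I)) := by
  refine LipschitzWith.of_dist_le_mul fun a b => ?_
  have e : y * Complex.exp (a * Complex.I) - y * Complex.exp (b * Complex.I)
      = y * Complex.exp (Complex.I * b) * (Complex.exp (Complex.I * ((a - b : ℝ) : ℂ)) - 1) := by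
    have : Complex.exp (a * Complex.I)
        = Complex.exp (Complex.I * b) * Complex.exp (Complex.I * ((a - b : ℝ) : ℂ)) := by
      rw [← Complex.exp_add]; congr 1; push_cast; ring
    rw [this, mul_comm (b : ℂ)]; ring
  rw [dist_eq_norm, e, norm_mul, norm_mul, Complex.norm_exp_I_mul_ofReal, mul_one, dist_eq_norm]
  exact mul_le_mul hy Real.norm_exp_I_mul_ofReal_sub_one_le (norm_nonneg _) (by norm_num)

lemma upper_circle (x : ℂ) {ρ r : ℝ} (hρ : 1 ≤ ρ) (hρ2 : ρ ≤ 2) (hr : 0 < r) :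
    μH[1] (ball x r ∩ {w : ℂ | ‖w‖ = ρ}) ≤ ENNReal.ofReal (16 * r) := by
  rcases (ball x r ∩ {w : ℂ | ‖w‖ = ρ}).eq_empty_or_nonempty with h | ⟨y, hy, hyρ⟩
  · rw [h]; simp
  have hyρ' : ‖y‖ = ρ := hyρ
  have hy0 : y ≠ 0 := by rw [← norm_pos_iff]; linarith
  have hsub : ball x r ∩ {w : ℂ | ‖w‖ = ρ} ⊆
      (fun θ : ℝ => y * Complex.exp (θ * Complex.I)) '' Icc (-(4 * r)) (4 * r) := by
    rintro w ⟨hw, hwρ⟩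
    have hwρ' : ‖w‖ = ρ := hwρ
    have hwy : ‖w / y‖ = 1 := by rw [norm_div, hwρ', hyρ']; exact div_self (by linarith)
    have hw0 : w / y ≠ 0 := by rw [← norm_pos_iff]; linarith
    refine ⟨(w / y).arg, ?_, ?_⟩
    · have h1 := Complex.angle_le_mul_norm_sub hwy norm_one
      rw [Complex.angle_one_right hw0] at h1
      have h2 : ‖w / y - 1‖ ≤ 2 * r := by
        have e : w / y - 1 = (w - y) / y := by field_simp
        rw [e, norm_div, hyρ']
        refine (div_le_self (norm_nonneg _) hρ).trans ?_
        rw [← dist_eq_norm]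
        have := dist_triangle_right w y x
        rw [mem_ball] at hw hy
        linarith
      rw [mem_Icc, ← abs_le]
      have h3 := mul_le_mul_of_nonneg_left h2 (by positivity : 0 ≤ Real.pi / 2)
      have h4 := mul_le_mul_of_nonneg_right Real.pi_le_four hr.le
      linarith
    · have := Complex.norm_mul_exp_arg_mul_I (w / y)
      rw [hwy, Complex.ofReal_one, one_mul] at this
      simp only
      rw [this]; field_simp
  refine (measure_mono hsub).trans
    (((lipschitz_circle (by linarith)).hausdorffMeasure_image_le zero_le_one _).trans ?_)
  rw [hausdorffMeasure_real, Real.volume_Icc, ENNReal.rpow_one]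
  have : ((2 : ℝ≥0) : ℝ≥0∞) = ENNReal.ofReal 2 := by simp
  rw [this, ← ENNReal.ofReal_mul (by norm_num)]
  apply ENNReal.ofReal_le_ofReal
  linarith

lemma lower_circle (x : ℂ) {ρ r : ℝ} (hρ : 1 ≤ ρ) (hρ2 : ρ ≤ 2) (hx : ‖x‖ = ρ) (hr : 0 < r)
    (hr4 : r ≤ 4) :
    ENNReal.ofReal (r / 8) ≤ μH[1] (ball x r ∩ {w : ℂ | ‖w‖ = ρ}) := by
  have hx0 : x ≠ 0 := by rw [← norm_pos_iff]; linarith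
  have hL : LipschitzWith 1 (fun w : ℂ => (w / x).im) := by
    refine LipschitzWith.of_dist_le_mul fun a b => ?_
    rw [Real.dist_eq, ← Complex.sub_im, ← sub_div, dist_eq_norm, NNReal.coe_one, one_mul]
    refine (Complex.abs_im_le_norm _).trans ?_
    rw [norm_div, hx]
    exact div_le_self (norm_nonneg _) hρ
  have hsub : Icc 0 (r / 8) ⊆
      (fun w : ℂ => (w / x).im) '' (ball x r ∩ {w : ℂ | ‖w‖ = ρ}) := by
    rintro s ⟨hs0, hs1⟩
    have hs2 : s ^ 2 ≤ 1 / 4 := by nlinarith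
    set c := √(1 - s ^ 2) with hc
    have hc2 : c ^ 2 = 1 - s ^ 2 := Real.sq_sqrt (by linarith)
    have hc0 : 0 ≤ c := Real.sqrt_nonneg _
    have hc1 : 1 - s ^ 2 ≤ c := by
      have : c ≤ 1 := by nlinarith
      nlinarith
    refine ⟨x * ⟨c, s⟩, ⟨?_, ?_⟩, ?_⟩
    · rw [mem_ball, dist_eq_norm]
      have e : x * ⟨c, s⟩ - x = x * (⟨c, s⟩ - 1) := by ring
      have h2 : ‖(⟨c, s⟩ - 1 : ℂ)‖ ≤ 2 * s := by
        apply le_of_sq_le_sq _ (by positivity)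
        rw [← Complex.normSq_eq_norm_sq, Complex.normSq_apply]
        simp only [Complex.sub_re, Complex.sub_im, Complex.one_re, Complex.one_im]
        nlinarith
      rw [e, norm_mul, hx]
      nlinarith [norm_nonneg (⟨c, s⟩ - 1 : ℂ)]
    · have : ‖(⟨c, s⟩ : ℂ)‖ = 1 := by
        rw [← sq_eq_sq₀ (norm_nonneg _) zero_le_one, ← Complex.normSq_eq_norm_sq,
          Complex.normSq_apply]
        simp only
        nlinarith
      rw [mem_setOf_eq, norm_mul, this, hx, mul_one]
    · simp only
      rw [mul_div_cancel_left₀ _ hx0]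
  have h1 := (measure_mono hsub).trans (hL.hausdorffMeasure_image_le zero_le_one _)
  rw [hausdorffMeasure_real, Real.volume_Icc] at h1
  simpa using h1

lemma adr_frontier : IsADR 1 (frontier pinched) := by
  refine ⟨isClosed_frontier, 32, by norm_num, ?_⟩
  rw [frontier_pinched]
  intro x hx r hr hrd
  set e : ℂ ≃ₗᵢ[ℝ] Euc 2 := Complex.orthonormalBasisOneI.repr with he
  have hr4 : r ≤ 4 := by
    have : EMetric.diam {X : Euc 2 | ‖X‖ = 1 ∨ ‖X‖ = 2} ≤ ENNReal.ofReal 4 := by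
      apply EMetric.diam_le
      intro a ha b hb
      rw [edist_dist]
      apply ENNReal.ofReal_le_ofReal
      have h := dist_le_norm_add_norm a b
      rcases ha with ha | ha <;> rcases hb with hb | hb <;> linarith
    exact ((ENNReal.ofReal_lt_ofReal_iff (by norm_num)).1 (hrd.trans_le this)).le
  have key : ∀ s : Set (Euc 2), μH[1] s = μH[1] (e ⁻¹' s) := fun s =>
    (e.toIsometryEquiv.hausdorffMeasure_preimage 1 s).symm
  have hpre : ∀ ρ : ℝ, e ⁻¹' (ball x r ∩ {X : Euc 2 | ‖X‖ = ρ})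
      = ball (e.symm x) r ∩ {w : ℂ | ‖w‖ = ρ} := by
    intro ρ
    ext w
    have : dist (e w) x = dist w (e.symm x) := by
      rw [← e.dist_map w, e.apply_symm_apply]
    simp [mem_ball, this]
  rw [Real.rpow_one]
  constructor
  · have hmain : ∀ ρ : ℝ, 1 ≤ ρ → ρ ≤ 2 → ‖x‖ = ρ →
        ENNReal.ofReal (r / 32) ≤ μH[1] (ball x r ∩ {X : Euc 2 | ‖X‖ = ρ}) := by
      intro ρ h1 h2 h3
      rw [key, hpre]
      refine le_trans (ENNReal.ofReal_le_ofReal (by linarith)) (lower_circle _ h1 h2 ?_ hr hr4)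
      rw [e.symm.norm_map, h3]
    rcases hx with hx | hx
    · refine (hmain 1 le_rfl one_le_two hx).trans (measure_mono ?_)
      rintro w ⟨h1, h2⟩
      exact ⟨h1, Or.inl h2⟩
    · refine (hmain 2 one_le_two le_rfl hx).trans (measure_mono ?_)
      rintro w ⟨h1, h2⟩
      exact ⟨h1, Or.inr h2⟩
  · have hs : ball x r ∩ {X : Euc 2 | ‖X‖ = 1 ∨ ‖X‖ = 2}
        = (ball x r ∩ {X : Euc 2 | ‖X‖ = 1}) ∪ (ball x r ∩ {X : Euc 2 | ‖X‖ = 2}) := by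
      rw [← inter_union_distrib_left]; rfl
    rw [hs]
    refine (measure_union_le _ _).trans ?_
    rw [key, key, hpre, hpre]
    refine (add_le_add (upper_circle _ le_rfl one_le_two hr)
      (upper_circle _ one_le_two le_rfl hr)).trans ?_
    rw [← ENNReal.ofReal_add (by positivity) (by positivity)]
    apply ENNReal.ofReal_le_ofReal
    linarith

/-- **Example 3.5.** `Ω := B(0,1) ∪ {|X| > 2}` has `1`-ADR boundary and satisfies the 2-sided
local `(D₀, 1/2)`-John condition for some `D₀ ≥ 1`, yet it does not satisfy the Harnack chain
condition (it is not even connected), so it is not a chord-arc domain. -/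
theorem pinched_localJohn_small_scales_not_harnack :
    IsADR 1 (frontier pinched) ∧
    (∃ D₀ : ℝ, 1 ≤ D₀ ∧ LocalJohnWithin pinched D₀ (1 / 2) ∧
      LocalJohnWithin (interior pinchedᶜ) D₀ (1 / 2)) ∧
    ¬ HarnackChain pinched ∧ ¬ IsConnected pinched ∧ ¬ IsCAD 1 pinched := by
  exact ⟨adr_frontier, ⟨100, by norm_num, john_pinched, john_annulus⟩, not_harnack_pinched,
    not_connected_pinched, fun h => not_connected_pinched h.1.2.1⟩
end
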